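/- (Covering theorem for positive composition shells.) Let G be an abelian group and let f₁,…,f_k ∈ G. For h ∈ ℕ₀ define Σ_h(f₁,…,f_k) := {n₁f₁ + ⋯ + n_k f_k : n_j ∈ ℕ₀, n₁ + ⋯ + n_k = h}, and for h ≥ k define Σ_h^+(f₁,…,f_k) := {n₁f₁ + ⋯ + n_k f_k : n_j ∈ ℕ (all n_j ≥ 1), n₁ + ⋯ + n_k = h}. If k = 1, then for every h ∈ ℕ, Σ_{rh}(f₁) = {(r−1)h f₁} + Σ_h^+(f₁). If k ≥ 2 and h ≥ r(k−1)² + k, then there exists a set X_h ⊆ G with |X_h| ≤ C((r+1)(k−1), k−1) such that Σ_{rh}(f₁,…,f_k) ⊆ X_h + Σ_h^+(f₁,…,f_k). -/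

import Mathlib

open Pointwise BigOperators

/-- The composition shell `Σ_h(f₁,…,f_k) = {n₁f₁ + ⋯ + n_k f_k : nⱼ ∈ ℕ₀, ∑ nⱼ = h}`. -/
def shell {G : Type*} [AddCommMonoid G] {k : ℕ} (f : Fin k → G) (h : ℕ) : Set G :=
  {x | ∃ n : Fin k → ℕ, (∑ j, n j) = h ∧ x = ∑ j, n j • f j}

/-- The positive composition shell
`Σ_h^+(f₁,…,f_k) = {n₁f₁ + ⋯ + n_k f_k : nⱼ ≥ 1, ∑ nⱼ = h}`. -/
def shellPos {G : Type*} [AddCommMonoid G] {k : ℕ} (f : Fin k → G) (h : ℕ) : Set G :=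
  {x | ∃ n : Fin k → ℕ, (∀ j, 1 ≤ n j) ∧ (∑ j, n j) = h ∧ x = ∑ j, n j • f j}

theorem exists_le_sum_eq_aux {k : ℕ} (b : Fin k → ℕ) (N : ℕ) (hN : N ≤ ∑ j, b j) :
    ∃ a : Fin k → ℕ, (∀ j, a j ≤ b j) ∧ ∑ j, a j = N := by
  induction N with
  | zero => exact ⟨fun _ => 0, fun _ => Nat.zero_le _, by simp⟩
  | succ N ih =>
    obtain ⟨a, ha, hs⟩ := ih (by omega)
    obtain ⟨i, -, hi⟩ := Finset.exists_lt_of_sum_lt (s := Finset.univ) (f := a) (g := b) (by omega)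
    refine ⟨fun j => a j + if j = i then 1 else 0, fun j => ?_, ?_⟩
    · by_cases h : j = i
      · subst h; simp; omega
      · simpa [h] using ha j
    · simp [Finset.sum_add_distrib, hs]

theorem cover_aux {G : Type*} [AddCommGroup G] (d r : ℕ) (hr : 0 < r) (hd : 0 < d)
    (f : Fin (d + 1) → G) (h : ℕ) (hh : r * d ^ 2 + (d + 1) ≤ h) :
    ∃ X : Finset G, X.card ≤ ((r + 1) * d).choose d ∧
      shell f (r * h) ⊆ ↑X + shellPos f h := by
  classical
  obtain ⟨m, rfl⟩ : ∃ m, h = m + (d + 1) := ⟨h - (d + 1), by omega⟩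
  have hm : r * d ≤ m := by nlinarith [Nat.mul_le_mul_left (r * d) hd]
  obtain ⟨q, hq⟩ : ∃ q, q = m / d + 1 := ⟨_, rfl⟩
  have hq1 : d * (q - 1) ≤ m := by subst hq; simpa using Nat.mul_div_le m d
  have hq2 : m + 1 ≤ d * q := by subst hq; exact Nat.lt_mul_div_succ m hd
  have hq0 : 0 < q := by rw [hq]; exact Nat.succ_pos _
  obtain ⟨p, rfl⟩ : ∃ p, q = p + 1 := ⟨q - 1, by omega⟩
  simp only [Nat.add_sub_cancel] at hq1
  obtain ⟨s, rfl⟩ : ∃ s, r = s + 1 := ⟨r - 1, by omega⟩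
  obtain ⟨E, hE⟩ : ∃ E, (p + 1) * ((s + 1) * d) = E + (s * (m + (d + 1)) + (d + 1)) := by
    refine ⟨(p + 1) * ((s + 1) * d) - (s * (m + (d + 1)) + (d + 1)), ?_⟩
    have : s * (m + (d + 1)) + (d + 1) ≤ (p + 1) * ((s + 1) * d) := by
      nlinarith [Nat.mul_le_mul_left (s + 1) hq2]
    omega
  refine ⟨(Finset.finsuppAntidiag (Finset.univ : Finset (Fin (d + 1))) ((s + 1) * d)).image
    (fun a => ∑ j, ((p + 1) * a j) • f j - E • f 0 - ∑ j, f j), ?_, ?_⟩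
  · refine Finset.card_image_le.trans ?_
    rw [Finset.card_finsuppAntidiag_nat_eq_choose, Finset.card_univ, Fintype.card_fin,
      show d + 1 + (s + 1) * d - 1 = (s + 1) * d + d by omega,
      show (s + 1 + 1) * d = (s + 1) * d + d by ring]
    exact (Nat.choose_symm_add).le
  · rintro x ⟨n, hn, rfl⟩
    set b : Fin (d + 1) → ℕ := fun j => n j + if j = 0 then E else 0 with hb
    have hbs : ∑ j, b j = (s + 1) * (m + (d + 1)) + E := by
      simp [hb, Finset.sum_add_distrib, hn]
    have hfl : (s + 1) * d ≤ ∑ j, b j / (p + 1) := by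
      have h1 : ∑ j, b j ≤ (p + 1) * (∑ j, b j / (p + 1)) + (d + 1) * p := by
        calc ∑ j, b j ≤ ∑ j, ((p + 1) * (b j / (p + 1)) + p) := by
              refine Finset.sum_le_sum fun j _ => ?_
              have := Nat.div_add_mod (b j) (p + 1)
              have := Nat.mod_lt (b j) (show p + 1 > 0 from Nat.succ_pos p)
              omega
          _ = _ := by simp [Finset.sum_add_distrib, Finset.mul_sum]
      by_contra hlt
      push Not at hlt
      have h2 := Nat.mul_le_mul_left (p + 1) (Nat.succ_le_of_lt hlt)
      rw [Nat.succ_eq_add_one] at h2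
      nlinarith
    obtain ⟨a, ha, has⟩ := exists_le_sum_eq_aux _ _ hfl
    have hab : ∀ j, (p + 1) * a j ≤ b j := fun j =>
      (Nat.mul_le_mul_left _ (ha j)).trans (Nat.mul_div_le _ _)
    choose c hc using fun j => Nat.exists_eq_add_of_le (hab j)
    rw [Set.mem_add]
    refine ⟨_, Finset.mem_coe.2 (Finset.mem_image.2
      ⟨Finsupp.equivFunOnFinite.symm a, ?_, rfl⟩), ∑ j, (c j + 1) • f j,
      ⟨fun j => c j + 1, fun j => Nat.le_add_left 1 (c j), ?_, rfl⟩, ?_⟩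
    · simp [Finset.mem_finsuppAntidiag, has]
    · have h3 : ∑ j, b j = (p + 1) * ∑ j, a j + ∑ j, c j := by
        rw [Finset.mul_sum, ← Finset.sum_add_distrib]
        exact Finset.sum_congr rfl fun j _ => hc j
      rw [has, hbs, hE] at h3
      simp only [Finset.sum_add_distrib, Finset.sum_const, Finset.card_univ, Fintype.card_fin,
        smul_eq_mul, mul_one]
      nlinarith
    · have h4 : ∑ j, b j • f j = ∑ j, n j • f j + E • f 0 := by
        simp [hb, add_smul, Finset.sum_add_distrib, ite_smul]
      have h5 : ∑ j, b j • f j = ∑ j, ((p + 1) * a j) • f j + ∑ j, c j • f j := by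
        rw [← Finset.sum_add_distrib]
        exact Finset.sum_congr rfl fun j _ => by rw [hc j, add_smul]
      have h6 : ∑ j, (c j + 1) • f j = ∑ j, c j • f j + ∑ j, f j := by
        simp [add_smul, Finset.sum_add_distrib]
      have h7 : ∑ j, n j • f j = ∑ j, ((p + 1) * a j) • f j + ∑ j, c j • f j - E • f 0 := by
        rw [← h5, h4]; abel
      rw [h6, h7]
      simp only [Finsupp.equivFunOnFinite_symm_apply_apply]
      abel

/-- Covering theorem for positive composition shells: for `k = 1`,
`Σ_{rh}(f₁) = {(r−1)h f₁} + Σ_h^+(f₁)` for every `h ≥ 1`; for `k ≥ 2` and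
`h ≥ r(k−1)² + k`, there is `X_h` with `|X_h| ≤ C((r+1)(k−1), k−1)` and
`Σ_{rh} ⊆ X_h + Σ_h^+`. -/
theorem stmt11 {G : Type*} [AddCommGroup G] (k r : ℕ) (hr : 0 < r) (f : Fin k → G) :
    (∀ (hk : k = 1) (h : ℕ), 0 < h →
      shell f (r * h) = {((r - 1) * h) • f ⟨0, by omega⟩} + shellPos f h) ∧
    (2 ≤ k → ∀ h : ℕ, r * (k - 1) ^ 2 + k ≤ h →
      ∃ X : Finset G, X.card ≤ ((r + 1) * (k - 1)).choose (k - 1) ∧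
        shell f (r * h) ⊆ ↑X + shellPos f h) := by
  refine ⟨?_, ?_⟩
  · rintro rfl h hh
    obtain ⟨s, rfl⟩ : ∃ s, r = s + 1 := ⟨r - 1, by omega⟩
    ext x
    simp only [shell, shellPos, Set.singleton_add, Set.mem_image, Set.mem_ofPred_eq,
      Fin.sum_univ_one, Nat.add_sub_cancel]
    constructor
    · rintro ⟨n, hn, rfl⟩
      refine ⟨h • f 0, ⟨fun _ => h, fun _ => hh, rfl, rfl⟩, ?_⟩
      rw [hn, add_mul, one_mul, add_smul]
      rfl
    · rintro ⟨y, ⟨n, -, hn, rfl⟩, rfl⟩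
      refine ⟨fun _ => (s + 1) * h, rfl, ?_⟩
      rw [hn, add_mul, one_mul, add_smul]
      rfl
  · intro hk h hh
    obtain ⟨d, rfl⟩ : ∃ d, k = d + 1 := ⟨k - 1, by omega⟩
    exact cover_aux d r hr (by omega) f h hh
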